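/- For all nonnegative integers t with t ≢ 1 (mod 4) (i.e., t = 4k, 4k+2, or 4k+3 for some nonnegative integer k) and all n ≥ 0, the number of overpartition t-tuples satisfies p̄_t(8n+6) ≡ 0 (mod 16). -/

import Mathlib

/-- The number of overpartitions of `n`: a partition of `n` together with a
choice of which distinct part values are overlined (the first occurrence of a
part value may be overlined), so that the count is `∑_{λ ⊢ n} 2^{#distinct parts of λ}`. -/
def overpartitionCount (n : ℕ) : ℕ :=
  ∑ p : n.Partition, 2 ^ p.parts.toFinset.card

/-- The number of overpartition `t`-tuples of `n`: `t`-tuples of overpartitions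
whose sizes sum to `n`. -/
def overpartitionTuples (t n : ℕ) : ℕ :=
  ∑ c ∈ Finset.Nat.antidiagonalTuple t n, ∏ i, overpartitionCount (c i)

/-!
Write `φ = 1 + 2S` with `S = ∑_{j ≥ 1} (-1)^j q^{j²}`. Gauss's identity
`φ = ∏ (1 - q^m) / (1 + q^m)` says that the overpartition series is `φ⁻¹`. Modulo 16 the binomial
theorem gives `φ^m = 1 + 2mS + 4 (m choose 2) S² + 8 (m choose 3) S³`; in particular `φ^8 = 1`, so
the series of overpartition `t`-tuples is `φ^{7t}`. The terms in `S` and `S²` miss the exponents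
`8n + 6`, which are not sums of at most two squares, and `(7t choose 3)` is even exactly when
`t % 4 ≠ 1`.

Gauss's identity is the limit of Shanks's finite identity
`∏_{k ≤ n} (1 + q^k) · (1 + 2 ∑_{j ≤ n} (-1)^j q^{j²}) = ∏_{k ≤ n} (1 - q^k) + O(q^{n+1})`, with
an explicit remainder whose recurrence in `n` telescopes.
-/

open PowerSeries Finset

section FiniteGaussIdentity

variable {R : Type*} [CommRing R]

/-- The summands of the remainder in Shanks's finite form of Gauss's identity for `∑ (-1)^j x^{j²}`,
indexed from `s = 0`. -/
def shanksTerm (x : R) (n s : ℕ) : R :=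
  (-1) ^ (s + 1) * x ^ ((n + 1) * (s + 1)) * (∏ k ∈ range s, (1 + x ^ (k + 1))) *
    ∏ k ∈ Ico (s + 1) n, (1 - x ^ (k + 1))

/-- The antidifference certifying the recurrence in `n` of the sum of `shanksTerm x n`. -/
def shanksCertificate (x : R) (n s : ℕ) : R :=
  (-1) ^ (s + 1) * x ^ ((n + 1) * (s + 1)) * (∏ k ∈ range s, (1 + x ^ (k + 1))) *
    ∏ k ∈ Ico s n, (1 - x ^ (k + 1))

lemma shanksTerm_succ_sub (x : R) {n s : ℕ} (hs : s < n) :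
    shanksTerm x (n + 1) s - (1 + x ^ (n + 1)) * shanksTerm x n s =
      shanksCertificate x n (s + 1) - shanksCertificate x n s := by
  simp only [shanksTerm, shanksCertificate]
  rw [prod_Ico_succ_top (Nat.succ_le_of_lt hs), prod_eq_prod_Ico_succ_bot hs, prod_range_succ]
  ring

lemma sum_shanksTerm_succ (x : R) (n : ℕ) :
    ∑ s ∈ range (n + 1), shanksTerm x (n + 1) s =
      (1 + x ^ (n + 1)) * ∑ s ∈ range n, shanksTerm x n s +
        x ^ (n + 1) * ∏ k ∈ range n, (1 - x ^ (k + 1)) +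
        (-1) ^ (n + 1) * x ^ ((n + 1) ^ 2) * ∏ k ∈ range (n + 1), (1 + x ^ (k + 1)) := by
  have telescope : ∑ s ∈ range n, shanksTerm x (n + 1) s -
      (1 + x ^ (n + 1)) * ∑ s ∈ range n, shanksTerm x n s =
        shanksCertificate x n n - shanksCertificate x n 0 := by
    rw [mul_sum, ← sum_sub_distrib, ← sum_range_sub]
    exact sum_congr rfl fun s hs ↦ shanksTerm_succ_sub x (mem_range.1 hs)
  have last : shanksTerm x (n + 1) n =
      x ^ (n + 1) * ((-1) ^ (n + 1) * x ^ ((n + 1) ^ 2) * ∏ k ∈ range n, (1 + x ^ (k + 1))) := by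
    simp only [shanksTerm, Ico_self, prod_empty]
    ring
  have top : shanksCertificate x n n =
      (-1) ^ (n + 1) * x ^ ((n + 1) ^ 2) * ∏ k ∈ range n, (1 + x ^ (k + 1)) := by
    simp only [shanksCertificate, Ico_self, prod_empty]
    ring
  have bottom : shanksCertificate x n 0 = -(x ^ (n + 1) * ∏ k ∈ range n, (1 - x ^ (k + 1))) := by
    simp [shanksCertificate]
  rw [sum_range_succ, last, prod_range_succ]
  linear_combination telescope + top - bottom

theorem prod_one_add_pow_mul_one_add_two_mul_sum_sq (x : R) (n : ℕ) :
    (∏ k ∈ range n, (1 + x ^ (k + 1))) *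
        (1 + 2 * ∑ j ∈ range n, (-1) ^ (j + 1) * x ^ ((j + 1) ^ 2)) =
      ∏ k ∈ range n, (1 - x ^ (k + 1)) + 2 * ∑ s ∈ range n, shanksTerm x n s := by
  induction n with
  | zero => simp
  | succ n ih =>
    rw [sum_shanksTerm_succ, sum_range_succ]
    simp only [prod_range_succ]
    linear_combination (1 + x ^ (n + 1)) * ih

lemma pow_succ_dvd_shanksTerm (x : R) (n s : ℕ) : x ^ (n + 1) ∣ shanksTerm x n s := by
  have h : x ^ (n + 1) ∣ x ^ ((n + 1) * (s + 1)) :=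
    pow_dvd_pow x (Nat.le_mul_of_pos_right _ s.succ_pos)
  exact ((h.mul_left _).mul_right _).mul_right _

end FiniteGaussIdentity

section GaussIdentity

/-- The power series `∑_{j ≥ 1} (-1)^j X^{j²}`, the nonconstant half of `thetaSeries`. The sign of
the `j`-th term is written as `(-1)^{j²}`, which equals `(-1)^j`. -/
def signedSquareSeries (R : Type*) [CommRing R] : R⟦X⟧ :=
  .mk fun n ↦ if IsSquare n ∧ n ≠ 0 then (-1) ^ n else 0

/-- Ramanujan's theta series `φ(-X) = ∑_{j ∈ ℤ} (-1)^j X^{j²}`, with the terms of `j` and `-j`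
combined. -/
noncomputable def thetaSeries (R : Type*) [CommRing R] : R⟦X⟧ :=
  1 + 2 * signedSquareSeries R

variable {R : Type*} [CommRing R]

lemma coeff_signedSquareSeries_eq_zero {n : ℕ} (hn : ¬IsSquare n) :
    coeff n (signedSquareSeries R) = 0 := by
  simp [signedSquareSeries, hn]

lemma coeff_signedSquareSeries_succ_sq (j : ℕ) :
    coeff ((j + 1) ^ 2) (signedSquareSeries R) = (-1) ^ (j + 1) := by
  rw [signedSquareSeries, coeff_mk, if_pos ⟨IsSquare.sq _, by positivity⟩]
  exact neg_one_pow_congr (by simp [Nat.even_pow])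

lemma coeff_signedSquareSeries_pow_two_eq_zero {n : ℕ} (hn : ∀ a b : ℕ, a ^ 2 + b ^ 2 ≠ n) :
    coeff n (signedSquareSeries R ^ 2) = 0 := by
  rw [sq, coeff_mul]
  refine sum_eq_zero fun p hp ↦ ?_
  by_contra h
  obtain ⟨a, ha⟩ := not_not.1 (mt coeff_signedSquareSeries_eq_zero (left_ne_zero_of_mul h))
  obtain ⟨b, hb⟩ := not_not.1 (mt coeff_signedSquareSeries_eq_zero (right_ne_zero_of_mul h))
  exact hn a b (by rw [sq, sq, ← ha, ← hb, mem_antidiagonal.1 hp])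

open Filter Topology PowerSeries.WithPiTopology

variable [TopologicalSpace R]

lemma hasSum_signedSquareSeries :
    HasSum (fun j : ℕ ↦ (-1) ^ (j + 1) * (X : R⟦X⟧) ^ ((j + 1) ^ 2)) (signedSquareSeries R) := by
  have inj : Function.Injective fun j : ℕ ↦ (j + 1) ^ 2 :=
    (Nat.pow_left_injective two_ne_zero).comp (add_left_injective 1)
  have support : ∀ n ∉ Set.range (fun j : ℕ ↦ (j + 1) ^ 2),
      monomial n (coeff n (signedSquareSeries R)) = 0 := by
    intro n hn
    suffices ¬(IsSquare n ∧ n ≠ 0) by simp [signedSquareSeries, this]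
    rintro ⟨⟨r, rfl⟩, hr⟩
    exact hn ⟨r - 1, by grind⟩
  have h := (inj.hasSum_iff support).2 (hasSum_of_monomials_self (signedSquareSeries R))
  convert h using 2 with j
  simp [coeff_signedSquareSeries_succ_sq, monomial_eq_C_mul_X_pow]

lemma tendsto_zero_of_X_pow_dvd {f : ℕ → R⟦X⟧} (hf : ∀ n, X ^ n ∣ f n) :
    Tendsto f atTop (𝓝 0) := by
  rw [tendsto_iff_coeff_tendsto]
  refine fun d ↦ tendsto_atTop_of_eventually_const (i₀ := d + 1) fun n hn ↦ ?_
  rw [map_zero, X_pow_dvd_iff.1 (hf n) d hn]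

lemma multipliable_one_add_X_pow : Multipliable fun n ↦ (1 : R⟦X⟧) + X ^ (n + 1) := by
  nontriviality R
  refine multipliable_one_add_of_tendsto_order_atTop_nhds_top R ?_
  simp_rw [order_X_pow]
  exact ENat.tendsto_natCast_nhds_top.comp (tendsto_add_atTop_nat 1)

variable [T2Space R]

lemma isUnit_tprod_one_sub_X_pow : IsUnit (∏' n, ((1 : R⟦X⟧) - X ^ (n + 1))) := by
  rw [isUnit_iff_constantCoeff,
    (multipliable_one_sub_X_pow R).map_tprod _ (continuous_constantCoeff R)]
  simp

theorem tprod_one_add_X_pow_mul_thetaSeries [IsTopologicalRing R] :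
    (∏' n, ((1 : R⟦X⟧) + X ^ (n + 1))) * thetaSeries R = ∏' n, (1 - X ^ (n + 1)) := by
  have lhs := multipliable_one_add_X_pow (R := R).tendsto_prod_tprod_nat.mul
    ((hasSum_signedSquareSeries (R := R).tendsto_sum_nat.const_mul 2).const_add 1)
  have remainder : Tendsto (fun n ↦ 2 * ∑ s ∈ range n, shanksTerm (X : R⟦X⟧) n s) atTop (𝓝 0) :=
    tendsto_zero_of_X_pow_dvd fun n ↦ dvd_mul_of_dvd_right (dvd_sum fun s _ ↦
      (pow_dvd_pow X n.le_succ).trans (pow_succ_dvd_shanksTerm X n s)) 2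
  have rhs := (multipliable_one_sub_X_pow R).tendsto_prod_tprod_nat.add remainder
  simp only [← prod_one_add_pow_mul_one_add_two_mul_sum_sq, add_zero] at rhs
  exact tendsto_nhds_unique lhs rhs

end GaussIdentity

section GeneratingFunction

/-- The generating function of overpartitions. -/
def overpartitionSeries (R : Type*) [CommSemiring R] : R⟦X⟧ :=
  .mk fun n ↦ (overpartitionCount n : R)

lemma overpartitionSeries_eq_genFun (R : Type*) [CommSemiring R] :
    overpartitionSeries R = Nat.Partition.genFun fun _ _ ↦ 2 := by
  ext n
  simp [overpartitionSeries, overpartitionCount, Finsupp.prod]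

lemma coeff_pow_eq_sum_antidiagonalTuple {R : Type*} [CommSemiring R] (f : R⟦X⟧) (t n : ℕ) :
    coeff n (f ^ t) = ∑ c ∈ Finset.Nat.antidiagonalTuple t n, ∏ i, coeff (c i) f := by
  rw [← Fin.prod_const, coeff_prod]
  exact sum_equiv Finsupp.equivFunOnFinite
    (by simp [mem_finsuppAntidiag, Finset.Nat.mem_antidiagonalTuple]) (by simp)

lemma coeff_overpartitionSeries_pow {R : Type*} [CommSemiring R] (t n : ℕ) :
    coeff n (overpartitionSeries R ^ t) = overpartitionTuples t n := by
  simp [coeff_pow_eq_sum_antidiagonalTuple, overpartitionTuples, overpartitionSeries]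

variable {R : Type*} [CommRing R]

section Topology

open PowerSeries.WithPiTopology

variable [TopologicalSpace R] [IsTopologicalRing R] [T2Space R]

lemma one_add_tsum_smul_pow_succ_mul_one_sub (c : R) {f : R⟦X⟧} (hf : constantCoeff f = 0) :
    (1 + ∑' j : ℕ, c • f ^ (j + 1)) * (1 - f) = 1 + (c - 1) • f := by
  have geom := tsum_pow_mul_one_sub_of_constantCoeff_eq_zero hf
  have factor : ∑' j : ℕ, c • f ^ (j + 1) = C c * f * ∑' j : ℕ, f ^ j := by
    simp only [smul_eq_C_mul, pow_succ', ← mul_assoc]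
    exact (summable_pow_of_constantCoeff_eq_zero hf).tsum_mul_left _
  rw [factor, smul_eq_C_mul, map_sub, map_one]
  linear_combination C c * f * geom

theorem overpartitionSeries_mul_tprod_one_sub_X_pow :
    overpartitionSeries R * ∏' n, (1 - X ^ (n + 1)) = ∏' n, (1 + X ^ (n + 1)) := by
  rw [overpartitionSeries_eq_genFun, Nat.Partition.genFun_eq_tprod,
    ← (Nat.Partition.multipliable_genFun fun _ _ ↦ (2 : R)).tprod_mul
      (multipliable_one_sub_X_pow R)]
  refine tprod_congr fun n ↦ ?_
  simp only [pow_mul]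
  rw [one_add_tsum_smul_pow_succ_mul_one_sub 2 (by simp), show (2 : R) - 1 = 1 by norm_num,
    one_smul]

end Topology

theorem overpartitionSeries_mul_thetaSeries : overpartitionSeries R * thetaSeries R = 1 := by
  let : TopologicalSpace R := ⊥
  have : DiscreteTopology R := ⟨rfl⟩
  refine (isUnit_tprod_one_sub_X_pow (R := R)).mul_left_cancel ?_
  linear_combination thetaSeries R * overpartitionSeries_mul_tprod_one_sub_X_pow (R := R) +
    tprod_one_add_X_pow_mul_thetaSeries (R := R)

end GeneratingFunction

section ModSixteen

lemma sq_add_sq_mod_eight_ne_six (a b : ℕ) : (a ^ 2 + b ^ 2) % 8 ≠ 6 := by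
  have squares : ∀ x y : ZMod 8, x ^ 2 + y ^ 2 ≠ 6 := by decide
  intro h
  apply squares a b
  exact_mod_cast (ZMod.natCast_eq_natCast_iff' _ 6 8).2 h

lemma even_choose_three_iff (n : ℕ) : Even (n.choose 3) ↔ n % 4 ≠ 3 := by
  have lucas : n.choose 3 ≡ (n % 2) * (n / 2) [MOD 2] := by
    simpa using Choose.choose_modEq_choose_mod_mul_choose_div_nat (n := n) (k := 3) (p := 2)
  rw [Nat.even_iff, lucas, ← Nat.even_iff, Nat.even_mul, Nat.even_iff, Nat.even_iff]
  omega

variable {R : Type*} [CommRing R]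

lemma one_add_two_mul_pow_of_sixteen_eq_zero (h16 : (16 : R) = 0) (s : R) (m : ℕ) :
    (1 + 2 * s) ^ m = 1 + 2 * m * s + 4 * m.choose 2 * s ^ 2 + 8 * m.choose 3 * s ^ 3 := by
  induction m with
  | zero => simp
  | succ m ih =>
    rw [pow_succ, ih, Nat.choose_succ_succ' m 1, Nat.choose_succ_succ' m 2, Nat.choose_one_right]
    push_cast
    linear_combination m.choose 3 * s ^ 4 * h16

lemma one_add_two_mul_pow_eight_of_sixteen_eq_zero (h16 : (16 : R) = 0) (s : R) :
    (1 + 2 * s) ^ 8 = 1 := by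
  rw [one_add_two_mul_pow_of_sixteen_eq_zero h16, show Nat.choose 8 2 = 28 from rfl,
    show Nat.choose 8 3 = 56 from rfl]
  push_cast
  linear_combination (s + 7 * s ^ 2 + 28 * s ^ 3) * h16

lemma overpartitionSeries_pow_of_sixteen_eq_zero (h16 : (16 : R) = 0) (t : ℕ) :
    overpartitionSeries R ^ t = thetaSeries R ^ (7 * t) := by
  have h16' : (16 : R⟦X⟧) = 0 := by rw [← map_ofNat C, h16, map_zero]
  have theta_pow_eight :=
    one_add_two_mul_pow_eight_of_sixteen_eq_zero h16' (signedSquareSeries R)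
  rw [← thetaSeries] at theta_pow_eight
  rw [pow_mul]
  congr 1
  linear_combination thetaSeries R ^ 7 * overpartitionSeries_mul_thetaSeries (R := R) -
    overpartitionSeries R * theta_pow_eight

theorem coeff_overpartitionSeries_pow_eq_zero (h16 : (16 : R) = 0) {t d : ℕ} (ht : t % 4 ≠ 1)
    (hd : d % 8 = 6) : coeff d (overpartitionSeries R ^ t) = 0 := by
  have h16' : (16 : R⟦X⟧) = 0 := by rw [← map_ofNat C, h16, map_zero]
  obtain ⟨c, hc⟩ : Even ((7 * t).choose 3) := (even_choose_three_iff _).2 (by omega)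
  have expansion : overpartitionSeries R ^ t = 1 + (2 * (7 * t)) • signedSquareSeries R +
      (4 * (7 * t).choose 2) • signedSquareSeries R ^ 2 := by
    rw [overpartitionSeries_pow_of_sixteen_eq_zero h16, thetaSeries,
      one_add_two_mul_pow_of_sixteen_eq_zero h16', hc]
    push_cast [nsmul_eq_mul]
    linear_combination c * signedSquareSeries R ^ 3 * h16'
  have not_sum_sq (a b : ℕ) : a ^ 2 + b ^ 2 ≠ d := by
    rintro rfl
    exact sq_add_sq_mod_eight_ne_six a b hd
  have not_sq : ¬IsSquare d := by
    rintro ⟨r, rfl⟩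
    exact not_sum_sq r 0 (by ring)
  rw [expansion, map_add, map_add, map_nsmul, map_nsmul, coeff_signedSquareSeries_eq_zero not_sq,
    coeff_signedSquareSeries_pow_two_eq_zero not_sum_sq, coeff_one, if_neg (by omega)]
  simp

end ModSixteen

theorem overpartitionTuples_eight_n_six_mod_sixteen (t n : ℕ) (ht : t % 4 ≠ 1) :
    overpartitionTuples t (8 * n + 6) ≡ 0 [MOD 16] := by
  have h16 : (16 : ZMod 16) = 0 := rfl
  rw [← ZMod.natCast_eq_natCast_iff, ← coeff_overpartitionSeries_pow, Nat.cast_zero]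
  exact coeff_overpartitionSeries_pow_eq_zero h16 ht (by omega)
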